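/- (Lemma 3.3, isentropic Euler case.) Let (ρ,u) be a classical solution of the isentropic compressible Euler equations on ℝⁿ × [0,T] satisfying the decay and integrability conditions, with M(0) > 0. If 1 < γ ≤ 1 + 2/n, then for all t ∈ [0,T]: (‖ℙ(0)‖²/(2M(0))) t² + F(0) t + G(0) ≤ G(t) ≤ IE(0) t² + F(0) t + G(0). If γ > 1 + 2/n, then for all t ∈ [0,T]: (‖ℙ(0)‖²/(2M(0))) t² + F(0) t + G(0) ≤ G(t) ≤ (n(γ−1)/2) IE(0) t² + F(0) t + G(0). -/

import Mathlib

open MeasureTheory Filter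
open scoped InnerProductSpace

noncomputable section

/-- A classical solution of the isentropic compressible Euler equations
`∂ₜρ + div(ρu) = 0`, `∂ₜ(ρuᵢ) + div(ρuᵢu) + ∂ᵢ(ρ^γ) = 0` on `ℝⁿ × [0,T]`,
together with the decay conditions (9-25), the integrability conditions on the
physical quantities, and differentiability of these quantities with derivatives
computed by differentiating under the integral sign. -/
structure IsentropicEulerSolution (n : ℕ) (γ T : ℝ) where
  ρ : ℝ → EuclideanSpace ℝ (Fin n) → ℝ
  u : ℝ → EuclideanSpace ℝ (Fin n) → EuclideanSpace ℝ (Fin n)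
  ρ_nonneg : ∀ t ∈ Set.Icc 0 T, ∀ x, 0 ≤ ρ t x
  /-- `ρ` is `C¹` on `[0,T] × ℝⁿ`. -/
  smooth_ρ : ContDiffOn ℝ 1 (fun p : ℝ × EuclideanSpace ℝ (Fin n) => ρ p.1 p.2)
    (Set.Icc 0 T ×ˢ Set.univ)
  /-- `u` is `C¹` on `[0,T] × ℝⁿ`. -/
  smooth_u : ContDiffOn ℝ 1 (fun p : ℝ × EuclideanSpace ℝ (Fin n) => u p.1 p.2)
    (Set.Icc 0 T ×ˢ Set.univ)
  /-- Conservation of mass: `∂ₜρ + div(ρu) = 0`. -/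
  mass_eq : ∀ t ∈ Set.Icc 0 T, ∀ x,
    deriv (fun τ => ρ τ x) t
      + ∑ i : Fin n, fderiv ℝ (fun y => ρ t y * u t y i) x (EuclideanSpace.single i 1) = 0
  /-- Conservation of momentum: `∂ₜ(ρuᵢ) + div(ρuᵢu) + ∂ᵢ(ρ^γ) = 0`. -/
  momentum_eq : ∀ t ∈ Set.Icc 0 T, ∀ x, ∀ i : Fin n,
    deriv (fun τ => ρ τ x * u τ x i) t
      + ∑ j : Fin n, fderiv ℝ (fun y => ρ t y * u t y i * u t y j) x (EuclideanSpace.single j 1)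
      + fderiv ℝ (fun y => ρ t y ^ γ) x (EuclideanSpace.single i 1) = 0
  /-- decay: `|u| → 0` as `|x| → ∞`. -/
  decay_u : ∀ t ∈ Set.Icc 0 T,
    Tendsto (fun x => ‖u t x‖) (Bornology.cobounded _) (nhds 0)
  /-- decay: `ρ|u| = o(|x|^{-(n+1)})`. -/
  decay_ρu : ∀ t ∈ Set.Icc 0 T,
    Tendsto (fun x => ‖x‖ ^ (n + 1) * (ρ t x * ‖u t x‖)) (Bornology.cobounded _) (nhds 0)
  /-- decay: `|∇ₓu| = o(|x|^{-n})`. -/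
  decay_gradu : ∀ t ∈ Set.Icc 0 T,
    Tendsto (fun x => ‖x‖ ^ n * ‖fderiv ℝ (u t) x‖) (Bornology.cobounded _) (nhds 0)
  /-- decay: the pressure `ρ^γ = o(|x|^{-n})`. -/
  decay_p : ∀ t ∈ Set.Icc 0 T,
    Tendsto (fun x => ‖x‖ ^ n * ρ t x ^ γ) (Bornology.cobounded _) (nhds 0)
  int_ρ : ∀ t ∈ Set.Icc 0 T, Integrable (ρ t)
  int_ρu : ∀ t ∈ Set.Icc 0 T, Integrable (fun x => ρ t x * ‖u t x‖)
  int_ρu2 : ∀ t ∈ Set.Icc 0 T, Integrable (fun x => ρ t x * ‖u t x‖ ^ 2)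
  int_ρx2 : ∀ t ∈ Set.Icc 0 T, Integrable (fun x => ρ t x * ‖x‖ ^ 2)
  int_ρux : ∀ t ∈ Set.Icc 0 T, Integrable (fun x => ρ t x * ‖u t x‖ * ‖x‖)
  int_ργ : ∀ t ∈ Set.Icc 0 T, Integrable (fun x => ρ t x ^ γ)
  /-- `M(t) = ∫ρ` is differentiable, by differentiation under the integral sign. -/
  hM : ∀ t ∈ Set.Icc 0 T,
    HasDerivAt (fun τ => ∫ x, ρ τ x) (∫ x, deriv (fun τ => ρ τ x) t) t
  /-- `ℙ(t) = ∫ρu` is differentiable, by differentiation under the integral sign. -/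
  hP : ∀ t ∈ Set.Icc 0 T,
    HasDerivAt (fun τ => ∫ x, ρ τ x • u τ x) (∫ x, deriv (fun τ => ρ τ x • u τ x) t) t
  /-- `F(t) = ∫ρ u·x` is differentiable, by differentiation under the integral sign. -/
  hF : ∀ t ∈ Set.Icc 0 T,
    HasDerivAt (fun τ => ∫ x, ρ τ x * ⟪u τ x, x⟫_ℝ)
      (∫ x, deriv (fun τ => ρ τ x * ⟪u τ x, x⟫_ℝ) t) t
  /-- `G(t) = (1/2)∫ρ|x|²` is differentiable, by differentiation under the integral sign. -/
  hG : ∀ t ∈ Set.Icc 0 T,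
    HasDerivAt (fun τ => (1 / 2 : ℝ) * ∫ x, ρ τ x * ‖x‖ ^ 2)
      ((1 / 2 : ℝ) * ∫ x, deriv (fun τ => ρ τ x * ‖x‖ ^ 2) t) t
  /-- `IE(t) = E_k(t) + I(t)` is differentiable, by differentiation under the integral
  sign. -/
  hIE : ∀ t ∈ Set.Icc 0 T,
    HasDerivAt (fun τ => ∫ x, ((1 / 2 : ℝ) * ρ τ x * ‖u τ x‖ ^ 2 + ρ τ x ^ γ / (γ - 1)))
      (∫ x, deriv (fun τ => (1 / 2 : ℝ) * ρ τ x * ‖u τ x‖ ^ 2 + ρ τ x ^ γ / (γ - 1)) t) t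

namespace IsentropicEulerSolution

variable {n : ℕ} {γ T : ℝ}

/-- The mass `M(t) = ∫ ρ dx`. -/
def M (S : IsentropicEulerSolution n γ T) (t : ℝ) : ℝ := ∫ x, S.ρ t x

/-- The momentum `ℙ(t) = ∫ ρ u dx`. -/
def P (S : IsentropicEulerSolution n γ T) (t : ℝ) : EuclideanSpace ℝ (Fin n) :=
  ∫ x, S.ρ t x • S.u t x

/-- The momentum weight `F(t) = ∫ ρ u·x dx`. -/
def F (S : IsentropicEulerSolution n γ T) (t : ℝ) : ℝ := ∫ x, S.ρ t x * ⟪S.u t x, x⟫_ℝ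

/-- The momentum of inertia `G(t) = (1/2) ∫ ρ |x|² dx`. -/
def G (S : IsentropicEulerSolution n γ T) (t : ℝ) : ℝ := (1 / 2 : ℝ) * ∫ x, S.ρ t x * ‖x‖ ^ 2

/-- The kinetic energy `E_k(t) = (1/2) ∫ ρ |u|² dx`. -/
def Ek (S : IsentropicEulerSolution n γ T) (t : ℝ) : ℝ :=
  (1 / 2 : ℝ) * ∫ x, S.ρ t x * ‖S.u t x‖ ^ 2

/-- The potential energy `I(t) = (1/(γ−1)) ∫ ρ^γ dx`. -/
def I (S : IsentropicEulerSolution n γ T) (t : ℝ) : ℝ := (1 / (γ - 1)) * ∫ x, S.ρ t x ^ γ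

/-- The energy `IE(t) = E_k(t) + I(t)`. -/
def IE (S : IsentropicEulerSolution n γ T) (t : ℝ) : ℝ := S.Ek t + S.I t

/-- The functional `IJ(t) = G(t) − (t+1)F(t) + (t+1)² IE(t)`. -/
def IJ (S : IsentropicEulerSolution n γ T) (t : ℝ) : ℝ :=
  S.G t - (t + 1) * S.F t + (t + 1) ^ 2 * S.IE t

end IsentropicEulerSolution

local notation "ℝ^" n => EuclideanSpace ℝ (Fin n)

/-- The divergence of a vector field given by its components. -/
def divergence {n : ℕ} (V : Fin n → (ℝ^ n) → ℝ) (x : ℝ^ n) : ℝ :=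
  ∑ i, fderiv ℝ (V i) x (EuclideanSpace.single i 1)

/-- The directional derivative of `φ` along a vector field given by its components. -/
def derivAlong {n : ℕ} (φ : (ℝ^ n) → ℝ) (V : Fin n → (ℝ^ n) → ℝ) (x : ℝ^ n) : ℝ :=
  ∑ i, fderiv ℝ φ x (EuclideanSpace.single i 1) * V i x

theorem integral_mul_divergence {n : ℕ} {φ : (ℝ^ n) → ℝ} {V : Fin n → (ℝ^ n) → ℝ}
    (hφ : ContDiff ℝ 1 φ) (hc : HasCompactSupport φ) (hV : ∀ i, ContDiff ℝ 1 (V i)) :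
    ∫ x, φ x * divergence V x = -∫ x, derivAlong φ V x := by
  have h1 (i : Fin n) : Integrable
      (fun x => fderiv ℝ φ x (EuclideanSpace.single i 1) * V i x) := by
    refine Continuous.integrable_of_hasCompactSupport ?_ ?_
    · exact ((hφ.continuous_fderiv one_ne_zero).clm_apply continuous_const).mul (hV i).continuous
    · exact (hc.fderiv_apply ℝ _).mul_right
  have h2 (i : Fin n) : Integrable
      (fun x => φ x * fderiv ℝ (V i) x (EuclideanSpace.single i 1)) := by
    refine Continuous.integrable_of_hasCompactSupport ?_ hc.mul_right
    exact hφ.continuous.mul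
      (((hV i).continuous_fderiv one_ne_zero).clm_apply continuous_const)
  simp only [divergence, derivAlong, Finset.mul_sum]
  rw [integral_finsetSum _ fun i _ => h2 i, integral_finsetSum _ fun i _ => h1 i,
    ← Finset.sum_neg_distrib]
  refine Finset.sum_congr rfl fun i _ => ?_
  refine integral_mul_fderiv_eq_neg_fderiv_mul_of_integrable (h1 i) (h2 i) ?_
    (fun x _ => (hφ.differentiable one_ne_zero) x)
    (fun x _ => ((hV i).differentiable one_ne_zero) x)
  exact (hφ.continuous.mul (hV i).continuous).integrable_of_hasCompactSupport hc.mul_right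

theorem continuous_derivAlong {n : ℕ} {φ : (ℝ^ n) → ℝ} {V : Fin n → (ℝ^ n) → ℝ}
    (hφ : ContDiff ℝ 1 φ) (hV : ∀ i, Continuous (V i)) : Continuous (derivAlong φ V) :=
  continuous_finsetSum _ fun i _ =>
    ((hφ.continuous_fderiv one_ne_zero).clm_apply continuous_const).mul (hV i)

theorem abs_fderiv_single_le {n : ℕ} (φ : (ℝ^ n) → ℝ) (x : ℝ^ n) (i : Fin n) :
    |fderiv ℝ φ x (EuclideanSpace.single i 1)| ≤ ‖fderiv ℝ φ x‖ := by
  simpa using (fderiv ℝ φ x).le_opNorm (EuclideanSpace.single i 1)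

theorem abs_derivAlong_le {n : ℕ} (φ : (ℝ^ n) → ℝ) (V : Fin n → (ℝ^ n) → ℝ) (x : ℝ^ n) :
    |derivAlong φ V x| ≤ ‖fderiv ℝ φ x‖ * ∑ i, |V i x| := by
  rw [Finset.mul_sum]
  refine (Finset.abs_sum_le_sum_abs _ _).trans (Finset.sum_le_sum fun i _ => ?_)
  rw [abs_mul]
  gcongr
  exact abs_fderiv_single_le φ x i

/-- An exhausting sequence of `C¹` cutoff functions with gradients bounded by `C / (1 + |x|)`. -/
structure IsCutoffSeq {n : ℕ} (χ : ℕ → (ℝ^ n) → ℝ) (C : ℝ) : Prop where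
  contDiff : ∀ k, ContDiff ℝ 1 (χ k)
  hasCompactSupport : ∀ k, HasCompactSupport (χ k)
  abs_le_one : ∀ k x, |χ k x| ≤ 1
  eventually_eq_one : ∀ x, ∀ᶠ k in atTop, χ k =ᶠ[nhds x] 1
  norm_fderiv_le : ∀ k x, ‖fderiv ℝ (χ k) x‖ ≤ C
  norm_fderiv_mul_le : ∀ k x, ‖fderiv ℝ (χ k) x‖ * ‖x‖ ≤ C

theorem exists_isCutoffSeq (n : ℕ) :
    ∃ (χ : ℕ → (ℝ^ n) → ℝ) (C : ℝ), IsCutoffSeq χ C := by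
  let ψ : ContDiffBump (0 : ℝ^ n) := ⟨1, 2, one_pos, one_lt_two⟩
  have hψ : ContDiff ℝ 1 ψ := ψ.contDiff
  have hψ' : Continuous (fderiv ℝ ψ) := hψ.continuous_fderiv one_ne_zero
  have hs : HasCompactSupport (fderiv ℝ ψ) := ψ.hasCompactSupport.fderiv ℝ
  obtain ⟨C₁, h₁⟩ := hs.exists_bound_of_continuous hψ'
  obtain ⟨C₂, h₂⟩ := (hs.norm.mul_right (f' := fun x => ‖x‖)).exists_bound_of_continuous
    (hψ'.norm.mul continuous_norm)
  have hd (k : ℕ) (x : ℝ^ n) :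
      fderiv ℝ (fun x => ψ (((k : ℝ) + 1)⁻¹ • x)) x
        = ((k : ℝ) + 1)⁻¹ • fderiv ℝ ψ (((k : ℝ) + 1)⁻¹ • x) := by
    simpa using fderiv_comp_smul (𝕜 := ℝ) (f := ψ) (((k : ℝ) + 1)⁻¹) (x := x)
  have hpos (k : ℕ) : (0 : ℝ) < ((k : ℝ) + 1)⁻¹ := by positivity
  refine ⟨fun k x => ψ (((k : ℝ) + 1)⁻¹ • x), max C₁ C₂, ?_, ?_, ?_, ?_, ?_, ?_⟩
  · exact fun k => hψ.comp (contDiff_const_smul _)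
  · exact fun k => ψ.hasCompactSupport.comp_smul (hpos k).ne'
  · exact fun k x => abs_le.2 ⟨by linarith [ψ.nonneg (x := ((k : ℝ) + 1)⁻¹ • x)], ψ.le_one⟩
  · intro x
    obtain ⟨N, hN⟩ := exists_nat_gt ‖x‖
    filter_upwards [eventually_ge_atTop N] with k hk
    have hx : ((k : ℝ) + 1)⁻¹ • x ∈ Metric.ball (0 : ℝ^ n) ψ.rIn := by
      have hk' : (N : ℝ) ≤ k := by exact_mod_cast hk
      have : ((k : ℝ) + 1)⁻¹ * ‖x‖ < 1 := by
        rw [inv_mul_lt_iff₀ (by positivity)]; linarith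
      simpa [norm_smul, abs_of_pos (hpos k), ψ, abs_of_pos (show (0 : ℝ) < k + 1 by positivity)]
        using this
    exact (continuous_const_smul _).continuousAt.eventually (ψ.eventuallyEq_one_of_mem_ball hx)
  · intro k x
    rw [hd, norm_smul, Real.norm_of_nonneg (hpos k).le]
    calc ((k : ℝ) + 1)⁻¹ * ‖fderiv ℝ ψ (((k : ℝ) + 1)⁻¹ • x)‖
        ≤ 1 * C₁ := by
          gcongr
          · exact inv_le_one_of_one_le₀ (by linarith [(Nat.cast_nonneg k : (0 : ℝ) ≤ k)])
          · exact h₁ _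
      _ ≤ _ := by simp
  · intro k x
    have := h₂ (((k : ℝ) + 1)⁻¹ • x)
    rw [hd, norm_smul, Real.norm_of_nonneg (hpos k).le]
    refine le_trans ?_ (this.trans (le_max_right _ _))
    refine le_trans (le_of_eq ?_) (le_abs_self _)
    simp only [Pi.mul_apply, norm_smul, Real.norm_of_nonneg (hpos k).le]
    ring

namespace IsCutoffSeq

variable {n : ℕ} {χ : ℕ → (ℝ^ n) → ℝ} {C : ℝ}

theorem nonneg (hχ : IsCutoffSeq χ C) : 0 ≤ C :=
  (norm_nonneg _).trans (hχ.norm_fderiv_le 0 0)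

theorem eventually_mul_eq (hχ : IsCutoffSeq χ C) (φ : (ℝ^ n) → ℝ) (x : ℝ^ n) :
    ∀ᶠ k in atTop, (fun y => χ k y * φ y) =ᶠ[nhds x] φ := by
  filter_upwards [hχ.eventually_eq_one x] with k hk
  filter_upwards [hk] with y hy
  simp [hy]

theorem tendsto_integral_mul (hχ : IsCutoffSeq χ C) {f : (ℝ^ n) → ℝ} (hf : Integrable f) :
    Tendsto (fun k => ∫ x, χ k x * f x) atTop (nhds (∫ x, f x)) := by
  refine tendsto_integral_of_dominated_convergence (fun x => ‖f x‖)
    (fun k => (hχ.contDiff k).continuous.aestronglyMeasurable.mul hf.1) hf.norm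
    (fun k => ae_of_all _ fun x => ?_) (ae_of_all _ fun x => ?_)
  · rw [norm_mul]
    exact mul_le_of_le_one_left (norm_nonneg _) (hχ.abs_le_one k x)
  · exact tendsto_const_nhds.congr' <|
      (hχ.eventually_mul_eq f x).mono fun k hk => hk.eq_of_nhds.symm

theorem tendsto_integral_derivAlong (hχ : IsCutoffSeq χ C) {φ : (ℝ^ n) → ℝ}
    (hφ : ContDiff ℝ 1 φ) {V : Fin n → (ℝ^ n) → ℝ} (hV : ∀ i, Continuous (V i))
    {g : (ℝ^ n) → ℝ} (hg : Integrable g)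
    (hb : ∀ k x, |derivAlong (fun y => χ k y * φ y) V x| ≤ g x) :
    Tendsto (fun k => ∫ x, derivAlong (fun y => χ k y * φ y) V x) atTop
      (nhds (∫ x, derivAlong φ V x)) := by
  refine tendsto_integral_of_dominated_convergence g
    (fun k => (continuous_derivAlong ((hχ.contDiff k).mul hφ) hV).aestronglyMeasurable) hg
    (fun k => ae_of_all _ (hb k)) (ae_of_all _ fun x => ?_)
  refine tendsto_const_nhds.congr' <| (hχ.eventually_mul_eq φ x).mono fun k hk => ?_
  simp only [derivAlong, hk.fderiv_eq]

theorem norm_fderiv_mul_le_add (hχ : IsCutoffSeq χ C) {φ : (ℝ^ n) → ℝ}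
    (hφ : ContDiff ℝ 1 φ) (k : ℕ) (x : ℝ^ n) :
    ‖fderiv ℝ (fun y => χ k y * φ y) x‖ ≤ ‖fderiv ℝ φ x‖ + ‖fderiv ℝ (χ k) x‖ * |φ x| := by
  rw [fderiv_fun_mul ((hχ.contDiff k).differentiable one_ne_zero x)
    (hφ.differentiable one_ne_zero x)]
  refine (norm_add_le _ _).trans ?_
  rw [norm_smul, norm_smul, Real.norm_eq_abs, Real.norm_eq_abs, mul_comm |φ x|]
  gcongr
  exact mul_le_of_le_one_left (norm_nonneg _) (hχ.abs_le_one k x)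

end IsCutoffSeq

/-- An integrable `C¹` vector field with integrable divergence has zero total divergence. -/
theorem integral_divergence_eq_zero {n : ℕ} {V : Fin n → (ℝ^ n) → ℝ}
    (hV : ∀ i, ContDiff ℝ 1 (V i)) (hi : ∀ i, Integrable (V i))
    (hd : Integrable (divergence V)) : ∫ x, divergence V x = 0 := by
  obtain ⟨χ, C, hχ⟩ := exists_isCutoffSeq n
  have h1 := hχ.tendsto_integral_mul hd
  have h2 := hχ.tendsto_integral_derivAlong (φ := fun _ => 1) contDiff_const
    (fun i => (hV i).continuous) (g := fun x => C * ∑ i, |V i x|)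
    ((integrable_finsetSum _ fun i _ => (hi i).abs).const_mul C) (fun k x => by
      simp only [mul_one]
      refine (abs_derivAlong_le _ _ _).trans ?_
      gcongr
      exact hχ.norm_fderiv_le k x)
  simp only [mul_one] at h2
  have h3 : (fun k => ∫ x, χ k x * divergence V x) = fun k => -∫ x, derivAlong (χ k) V x :=
    funext fun k => integral_mul_divergence (hχ.contDiff k) (hχ.hasCompactSupport k) hV
  rw [h3] at h1
  have := tendsto_nhds_unique h1 h2.neg
  simpa [derivAlong] using this

theorem hasDerivAt_of_contDiffOn_Icc_prod {E F : Type*} [NormedAddCommGroup E] [NormedSpace ℝ E]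
    [NormedAddCommGroup F] [NormedSpace ℝ F]
    {T : ℝ} {q : ℝ → E → F} (hq : ContDiffOn ℝ 1 (fun p : ℝ × E => q p.1 p.2)
      (Set.Icc 0 T ×ˢ Set.univ)) {t : ℝ} (ht : t ∈ Set.Ioo 0 T) (x : E) :
    HasDerivAt (fun τ => q τ x) (fderiv ℝ (fun p : ℝ × E => q p.1 p.2) (t, x) (1, 0)) t := by
  have hmem : Set.Icc 0 T ×ˢ Set.univ ∈ nhds (t, x) :=
    prod_mem_nhds (Icc_mem_nhds ht.1 ht.2) univ_mem
  have h1 := ((hq.contDiffAt hmem).differentiableAt one_ne_zero).hasFDerivAt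
  have h2 : HasDerivAt (fun τ : ℝ => (τ, x)) ((1 : ℝ), (0 : E)) t :=
    (hasDerivAt_id t).prodMk (hasDerivAt_const t x)
  exact h1.comp_hasDerivAt t h2

theorem contDiff_slice {E F : Type*} [NormedAddCommGroup E] [NormedSpace ℝ E]
    [NormedAddCommGroup F] [NormedSpace ℝ F]
    {s : Set ℝ} {q : ℝ → E → F} (hq : ContDiffOn ℝ 1 (fun p : ℝ × E => q p.1 p.2)
      (s ×ˢ Set.univ)) {t : ℝ} (ht : t ∈ s) : ContDiff ℝ 1 (q t) := by
  rw [← contDiffOn_univ]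
  exact hq.comp (f := fun x => (t, x)) (contDiff_prodMk_right t).contDiffOn
    fun x _ => ⟨ht, Set.mem_univ _⟩

/-- `q` is a `C¹` density on `[0,T] × ℝⁿ` obeying the conservation law `∂ₜq + div V = 0`. -/
structure IsConservationLaw {n : ℕ} (T : ℝ) (q : ℝ → (ℝ^ n) → ℝ)
    (V : Fin n → ℝ → (ℝ^ n) → ℝ) : Prop where
  contDiffOn_density : ContDiffOn ℝ 1 (fun p : ℝ × (ℝ^ n) => q p.1 p.2) (Set.Icc 0 T ×ˢ Set.univ)
  contDiffOn_flux : ∀ i, ContDiffOn ℝ 1 (fun p : ℝ × (ℝ^ n) => V i p.1 p.2)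
    (Set.Icc 0 T ×ˢ Set.univ)
  deriv_eq : ∀ t ∈ Set.Ioo 0 T, ∀ x, deriv (fun τ => q τ x) t = -divergence (fun i => V i t) x

namespace IsConservationLaw

variable {n : ℕ} {T : ℝ} {q : ℝ → (ℝ^ n) → ℝ} {V : Fin n → ℝ → (ℝ^ n) → ℝ}

theorem contDiff_flux (h : IsConservationLaw T q V) {t : ℝ} (ht : t ∈ Set.Icc 0 T) (i : Fin n) :
    ContDiff ℝ 1 (V i t) :=
  contDiff_slice (h.contDiffOn_flux i) ht

theorem hasDerivAt_integral_mul (h : IsConservationLaw T q V) {φ : (ℝ^ n) → ℝ}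
    (hφ : ContDiff ℝ 1 φ) (hc : HasCompactSupport φ) {t : ℝ} (ht : t ∈ Set.Ioo 0 T) :
    HasDerivAt (fun τ => ∫ x, φ x * q τ x) (∫ x, derivAlong φ (fun i => V i t) x) t := by
  have hIcc := Set.Ioo_subset_Icc_self ht
  obtain ⟨δ, hδ, hsub⟩ := Metric.nhds_basis_closedBall.mem_iff.1 (Ioo_mem_nhds ht.1 ht.2)
  set D : ℝ × (ℝ^ n) → ℝ := fun p => fderiv ℝ (fun p : ℝ × (ℝ^ n) => q p.1 p.2) p (1, 0)
  have hDc : ContinuousOn D (Set.Ioo 0 T ×ˢ Set.univ) :=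
    ((h.contDiffOn_density.mono
      (Set.prod_mono Set.Ioo_subset_Icc_self subset_rfl)).continuousOn_fderiv_of_isOpen
        (isOpen_Ioo.prod isOpen_univ) le_rfl).clm_apply continuousOn_const
  obtain ⟨K, hK⟩ := ((isCompact_closedBall t δ).prod hc.isCompact).exists_bound_of_continuousOn
    (hDc.mono (Set.prod_mono hsub (Set.subset_univ _)))
  have hder : ∀ τ ∈ Set.Ioo 0 T, ∀ x, HasDerivAt (fun τ => q τ x) (D (τ, x)) τ :=
    fun τ hτ x => hasDerivAt_of_contDiffOn_Icc_prod h.contDiffOn_density hτ x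
  have hDt : Continuous fun x => D (t, x) :=
    hDc.comp_continuous (by fun_prop) fun x => ⟨ht, Set.mem_univ _⟩
  have hqc : ∀ τ ∈ Set.Icc 0 T, Continuous fun x => φ x * q τ x := fun τ hτ =>
    hφ.continuous.mul (contDiff_slice h.contDiffOn_density hτ).continuous
  have key := (hasDerivAt_integral_of_dominated_loc_of_deriv_le (μ := volume)
    (F := fun τ x => φ x * q τ x) (F' := fun τ x => φ x * D (τ, x))
    (bound := fun x => K * ‖φ x‖) (Metric.closedBall_mem_nhds t hδ)
    (by
      filter_upwards [Icc_mem_nhds ht.1 ht.2] with τ hτ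
      exact (hqc τ hτ).aestronglyMeasurable)
    ((hqc t hIcc).integrable_of_hasCompactSupport hc.mul_right)
    (hφ.continuous.mul hDt).aestronglyMeasurable
    (ae_of_all _ fun x τ hτ => by
      rw [norm_mul, mul_comm]
      by_cases hx : x ∈ tsupport φ
      · gcongr
        exact hK (τ, x) ⟨hτ, hx⟩
      · simp [image_eq_zero_of_notMem_tsupport hx])
    ((hφ.continuous.integrable_of_hasCompactSupport hc).norm.const_mul K)
    (ae_of_all _ fun x τ hτ => (hder τ (hsub hτ) x).const_mul (φ x))).2
  have hx (x) : φ x * D (t, x) = -(φ x * divergence (fun i => V i t) x) := by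
    rw [← (hder t ht x).deriv, h.deriv_eq t ht x]; ring
  rwa [integral_congr_ae (ae_of_all _ hx), integral_neg,
    integral_mul_divergence hφ hc (h.contDiff_flux hIcc), neg_neg] at key

theorem continuousOn_integral_derivAlong (h : IsConservationLaw T q V) {φ : (ℝ^ n) → ℝ}
    (hφ : ContDiff ℝ 1 φ) (hc : HasCompactSupport φ) :
    ContinuousOn (fun t => ∫ x, derivAlong φ (fun i => V i t) x) (Set.Icc 0 T) := by
  refine continuousOn_integral_of_compact_support hc.isCompact ?_ fun t x _ hx => ?_
  · change ContinuousOn (fun p : ℝ × (ℝ^ n) =>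
      ∑ i, fderiv ℝ φ p.2 (EuclideanSpace.single i 1) * V i p.1 p.2) _
    refine continuousOn_finsetSum _ fun i _ =>
      ContinuousOn.mul ?_ (h.contDiffOn_flux i).continuousOn
    exact (((hφ.continuous_fderiv one_ne_zero).comp continuous_snd).clm_apply
      continuous_const).continuousOn
  · have : fderiv ℝ φ x = 0 := by
      by_contra h0
      exact hx (support_fderiv_subset ℝ h0)
    simp [derivAlong, this]

theorem integral_mul_sub (h : IsConservationLaw T q V) {φ : (ℝ^ n) → ℝ}
    (hφ : ContDiff ℝ 1 φ) (hc : HasCompactSupport φ) {t : ℝ} (ht : t ∈ Set.Icc 0 T) :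
    ∫ τ in (0 : ℝ)..t, ∫ x, derivAlong φ (fun i => V i τ) x
      = (∫ x, φ x * q t x) - ∫ x, φ x * q 0 x := by
  have hsub : Set.Icc 0 t ⊆ Set.Icc 0 T := Set.Icc_subset_Icc_right ht.2
  refine intervalIntegral.integral_eq_sub_of_hasDerivAt_of_le ht.1
    (f := fun τ => ∫ x, φ x * q τ x) ?_
    (fun τ hτ => h.hasDerivAt_integral_mul hφ hc ⟨hτ.1, hτ.2.trans_le ht.2⟩) ?_
  · refine ContinuousOn.mono ?_ hsub
    refine continuousOn_integral_of_compact_support hc.isCompact ?_ fun t x _ hx => ?_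
    · exact (hφ.continuous.comp continuous_snd).continuousOn.mul h.contDiffOn_density.continuousOn
    · simp [image_eq_zero_of_notMem_tsupport hx]
  · exact ((h.continuousOn_integral_derivAlong hφ hc).mono hsub).intervalIntegrable_of_Icc ht.1

/-- The weighted balance law `d/dt ∫ φ q = ∫ ∇φ · V` in integrated form, for a weight `φ` which
need not have compact support. -/
theorem weighted_balance (h : IsConservationLaw T q V) {χ : ℕ → (ℝ^ n) → ℝ} {C : ℝ}
    (hχ : IsCutoffSeq χ C) {φ : (ℝ^ n) → ℝ} (hφ : ContDiff ℝ 1 φ)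
    (hint : ∀ t ∈ Set.Icc 0 T, Integrable fun x => φ x * q t x)
    {g : ℝ → (ℝ^ n) → ℝ} {K : ℝ} (hg : ∀ t ∈ Set.Icc 0 T, Integrable (g t))
    (hgK : ∀ t ∈ Set.Icc 0 T, ∫ x, g t x ≤ K)
    (hb : ∀ t ∈ Set.Icc 0 T, ∀ k x,
      |derivAlong (fun y => χ k y * φ y) (fun i => V i t) x| ≤ g t x)
    {t : ℝ} (ht : t ∈ Set.Icc 0 T) :
    IntervalIntegrable (fun τ => ∫ x, derivAlong φ (fun i => V i τ) x) volume 0 t ∧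
    ∫ τ in (0 : ℝ)..t, ∫ x, derivAlong φ (fun i => V i τ) x
      = (∫ x, φ x * q t x) - ∫ x, φ x * q 0 x := by
  have hmem : ∀ τ ∈ Set.uIoc 0 t, τ ∈ Set.Icc 0 T := fun τ hτ => by
    rw [Set.uIoc_of_le ht.1] at hτ
    exact ⟨hτ.1.le, hτ.2.trans ht.2⟩
  have hφk (k) : ContDiff ℝ 1 (fun y => χ k y * φ y) := (hχ.contDiff k).mul hφ
  have hck (k) : HasCompactSupport (fun y => χ k y * φ y) := (hχ.hasCompactSupport k).mul_right
  have hmeas (k : ℕ) : AEStronglyMeasurable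
      (fun τ => ∫ x, derivAlong (fun y => χ k y * φ y) (fun i => V i τ) x)
      (volume.restrict (Set.uIoc 0 t)) :=
    ((h.continuousOn_integral_derivAlong (hφk k) (hck k)).mono hmem).aestronglyMeasurable
      measurableSet_uIoc
  have hlim : ∀ τ ∈ Set.Icc 0 T, Tendsto
      (fun k => ∫ x, derivAlong (fun y => χ k y * φ y) (fun i => V i τ) x) atTop
      (nhds (∫ x, derivAlong φ (fun i => V i τ) x)) := fun τ hτ =>
    hχ.tendsto_integral_derivAlong hφ (fun i => (h.contDiff_flux hτ i).continuous) (hg τ hτ)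
      (hb τ hτ)
  have hbd : ∀ τ ∈ Set.Icc 0 T, ∀ k,
      ‖∫ x, derivAlong (fun y => χ k y * φ y) (fun i => V i τ) x‖ ≤ K := fun τ hτ k =>
    (norm_integral_le_of_norm_le (hg τ hτ) (ae_of_all _ (hb τ hτ k))).trans (hgK τ hτ)
  refine ⟨?_, ?_⟩
  · rw [intervalIntegrable_iff]
    refine Integrable.mono' (g := fun _ => K)
      (integrableOn_const (by simp [Set.uIoc_of_le ht.1])) ?_ ?_
    · refine aestronglyMeasurable_of_tendsto_ae atTop hmeas ?_
      exact (ae_restrict_iff' measurableSet_uIoc).2 (ae_of_all _ fun τ hτ => hlim τ (hmem τ hτ))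
    · refine (ae_restrict_iff' measurableSet_uIoc).2 (ae_of_all _ fun τ hτ => ?_)
      exact le_of_tendsto (hlim τ (hmem τ hτ)).norm
        (Eventually.of_forall (hbd τ (hmem τ hτ)))
  · have h1 := intervalIntegral.tendsto_integral_filter_of_dominated_convergence (μ := volume)
      (a := 0) (b := t) (fun _ => K) (Eventually.of_forall hmeas)
      (Eventually.of_forall fun k => ae_of_all _ fun τ hτ => hbd τ (hmem τ hτ) k)
      intervalIntegrable_const (ae_of_all _ fun τ hτ => hlim τ (hmem τ hτ))
    have h2 (τ) (hτ : τ ∈ Set.Icc 0 T) := hχ.tendsto_integral_mul (hint τ hτ)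
    have h3 := (h2 t ht).sub (h2 0 ⟨le_rfl, ht.1.trans ht.2⟩)
    refine tendsto_nhds_unique h1 (h3.congr fun k => ?_)
    rw [h.integral_mul_sub (hφk k) (hck k) ht]
    simp only [mul_assoc]

/-- The spatial integral of the time derivative vanishes, also when that derivative fails to be
integrable since the Bochner integral is then `0`. -/
theorem integral_deriv_eq_zero (h : IsConservationLaw T q V) {t : ℝ} (ht : t ∈ Set.Ioo 0 T)
    (hV : ∀ i, Integrable (V i t)) : ∫ x, deriv (fun τ => q τ x) t = 0 := by
  simp only [h.deriv_eq t ht, integral_neg, neg_eq_zero]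
  by_cases hd : Integrable (divergence fun i => V i t)
  · exact integral_divergence_eq_zero (h.contDiff_flux (Set.Ioo_subset_Icc_self ht)) hV hd
  · exact integral_undef hd

end IsConservationLaw

theorem eq_of_hasDerivAt_zero_Ioo {E : Type*} [NormedAddCommGroup E] [NormedSpace ℝ E]
    {f f' : ℝ → E} {T : ℝ}
    (hf : ∀ t ∈ Set.Icc 0 T, HasDerivAt f (f' t) t) (h0 : ∀ t ∈ Set.Ioo 0 T, f' t = 0)
    {t : ℝ} (ht : t ∈ Set.Icc 0 T) : f t = f 0 := by
  have h1 : ∀ s ∈ Set.Ioc 0 t, f t = f s := fun s hs => by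
    refine constant_of_has_deriv_right_zero (a := s) (b := t)
      (fun x hx => (hf x ⟨hs.1.le.trans hx.1, hx.2.trans ht.2⟩).continuousAt.continuousWithinAt)
      (fun x hx => ?_) t ⟨hs.2, le_rfl⟩
    have hx' : x ∈ Set.Ioo 0 T := ⟨hs.1.trans_le hx.1, hx.2.trans_le ht.2⟩
    exact h0 x hx' ▸ (hf x (Set.Ioo_subset_Icc_self hx')).hasDerivWithinAt
  rcases ht.1.eq_or_lt with rfl | htpos
  · rfl
  have h2 : Tendsto f (nhdsWithin 0 (Set.Ioi 0)) (nhds (f 0)) :=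
    (hf 0 ⟨le_rfl, ht.1.trans ht.2⟩).continuousAt.tendsto.mono_left nhdsWithin_le_nhds
  refine tendsto_nhds_unique (tendsto_const_nhds.congr' ?_) h2
  filter_upwards [Ioc_mem_nhdsGT htpos] with s hs using h1 s hs

namespace IsentropicEulerSolution

variable {n : ℕ} {γ T : ℝ}

theorem contDiffOn_u_apply (S : IsentropicEulerSolution n γ T) (i : Fin n) :
    ContDiffOn ℝ 1 (fun p : ℝ × (ℝ^ n) => S.u p.1 p.2 i) (Set.Icc 0 T ×ˢ Set.univ) :=
  contDiffOn_euclidean.1 S.smooth_u i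

theorem contDiffOn_pressure (S : IsentropicEulerSolution n γ T) (hγ : 1 < γ) :
    ContDiffOn ℝ 1 (fun p : ℝ × (ℝ^ n) => S.ρ p.1 p.2 ^ γ) (Set.Icc 0 T ×ˢ Set.univ) :=
  ContDiffOn.rpow_const_of_le (m := 1) (by simpa using S.smooth_ρ) (by simpa using hγ.le)

theorem contDiff_ρ (S : IsentropicEulerSolution n γ T) {t : ℝ} (ht : t ∈ Set.Icc 0 T) :
    ContDiff ℝ 1 (S.ρ t) :=
  contDiff_slice S.smooth_ρ ht

theorem contDiff_u_apply (S : IsentropicEulerSolution n γ T) {t : ℝ} (ht : t ∈ Set.Icc 0 T)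
    (i : Fin n) : ContDiff ℝ 1 (fun x => S.u t x i) :=
  contDiff_slice (q := fun t x => S.u t x i) (S.contDiffOn_u_apply i) ht

theorem contDiff_pressure (S : IsentropicEulerSolution n γ T) (hγ : 1 < γ) {t : ℝ}
    (ht : t ∈ Set.Icc 0 T) : ContDiff ℝ 1 (fun x => S.ρ t x ^ γ) :=
  contDiff_slice (q := fun t x => S.ρ t x ^ γ) (S.contDiffOn_pressure hγ) ht

theorem continuous_u (S : IsentropicEulerSolution n γ T) {t : ℝ} (ht : t ∈ Set.Icc 0 T) :
    Continuous (S.u t) :=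
  (contDiff_slice S.smooth_u ht).continuous

theorem mass_conservationLaw (S : IsentropicEulerSolution n γ T) :
    IsConservationLaw T S.ρ (fun i t x => S.ρ t x * S.u t x i) where
  contDiffOn_density := S.smooth_ρ
  contDiffOn_flux i := S.smooth_ρ.mul (S.contDiffOn_u_apply i)
  deriv_eq t ht x := eq_neg_of_add_eq_zero_left (S.mass_eq t (Set.Ioo_subset_Icc_self ht) x)

/-- The flux of the `i`-th component of momentum. -/
def momentumFlux (S : IsentropicEulerSolution n γ T) (i j : Fin n) (t : ℝ) (x : ℝ^ n) : ℝ :=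
  S.ρ t x * S.u t x i * S.u t x j + if j = i then S.ρ t x ^ γ else 0

theorem momentum_conservationLaw (S : IsentropicEulerSolution n γ T) (hγ : 1 < γ) (i : Fin n) :
    IsConservationLaw T (fun t x => S.ρ t x * S.u t x i) (S.momentumFlux i) where
  contDiffOn_density := S.smooth_ρ.mul (S.contDiffOn_u_apply i)
  contDiffOn_flux j := by
    refine ((S.smooth_ρ.mul (S.contDiffOn_u_apply i)).mul (S.contDiffOn_u_apply j)).add ?_
    split_ifs
    · exact S.contDiffOn_pressure hγ
    · exact contDiffOn_const
  deriv_eq t ht x := by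
    have hIcc := Set.Ioo_subset_Icc_self ht
    have hp := (S.contDiff_pressure hγ hIcc).differentiable one_ne_zero x
    have hm (j : Fin n) := (((S.contDiff_ρ hIcc).mul (S.contDiff_u_apply hIcc i)).mul
      (S.contDiff_u_apply hIcc j)).differentiable one_ne_zero x
    have hd (j : Fin n) : fderiv ℝ (S.momentumFlux i j t) x (EuclideanSpace.single j 1)
        = fderiv ℝ (fun y => S.ρ t y * S.u t y i * S.u t y j) x (EuclideanSpace.single j 1)
          + if j = i then fderiv ℝ (fun y => S.ρ t y ^ γ) x (EuclideanSpace.single i 1)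
            else 0 := by
      unfold momentumFlux
      split_ifs with hj
      · rw [fderiv_fun_add (hm j) hp, hj]; rfl
      · simp
    have := S.momentum_eq t hIcc x i
    simp only [divergence, hd, Finset.sum_add_distrib, Finset.sum_ite_eq', Finset.mem_univ,
      if_true]
    linarith

/-- The total energy density. -/
def energyDensity (S : IsentropicEulerSolution n γ T) (t : ℝ) (x : ℝ^ n) : ℝ :=
  (1 / 2 : ℝ) * S.ρ t x * ‖S.u t x‖ ^ 2 + S.ρ t x ^ γ / (γ - 1)

/-- The flux of total energy. -/
def energyFlux (S : IsentropicEulerSolution n γ T) (j : Fin n) (t : ℝ) (x : ℝ^ n) : ℝ :=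
  ((1 / 2 : ℝ) * S.ρ t x * ‖S.u t x‖ ^ 2 + γ / (γ - 1) * S.ρ t x ^ γ) * S.u t x j

/-- The pointwise energy identity, in terms of the values `r, U` of density and velocity, their
time derivatives `r', U'` and spatial derivatives `R, D`, and `W = r ^ (γ - 1)`. -/
theorem energy_identity {n : ℕ} {γ : ℝ} (hγ : 1 < γ) (r r' W : ℝ) (U U' R : Fin n → ℝ)
    (D : Fin n → Fin n → ℝ) (hmass : r' + ∑ j, (r * D j j + U j * R j) = 0)
    (hmom : ∀ i, r * U' i + U i * r' +
      ∑ j, (r * U i * D j j + U j * (r * D i j + U i * R j)) + γ * W * R i = 0) :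
    1 / 2 * r' * (∑ i, U i ^ 2) + 1 / 2 * r * (∑ i, 2 * U i * U' i) + r' * γ * W / (γ - 1) +
      ∑ j, ((1 / 2 * r * (∑ i, U i ^ 2) + γ / (γ - 1) * (W * r)) * D j j +
        U j * ((1 / 2 * r * (∑ i, 2 * U i * D i j) + 1 / 2 * R j * (∑ i, U i ^ 2)) +
          γ / (γ - 1) * (γ * W * R j))) = 0 := by
  set s := ∑ i, U i ^ 2 with hs
  set a := ∑ j, U j * R j with ha
  set d := ∑ j, D j j with hd
  set f := ∑ i, U i * U' i with hf
  set e := ∑ j, ∑ i, U i * U j * D i j with he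
  clear_value s a d f e
  have h1 : r' + (r * d + a) = 0 := by
    rw [hd, ha, Finset.mul_sum, ← Finset.sum_add_distrib]; exact hmass
  have h2 : r * f + s * r' + r * s * d + r * e + s * a + γ * W * a = 0 := by
    have hsum : ∑ i, U i * (r * U' i + U i * r' +
        ∑ j, (r * U i * D j j + U j * (r * D i j + U i * R j)) + γ * W * R i) = 0 :=
      Finset.sum_eq_zero fun i _ => by rw [hmom i, mul_zero]
    have hi (i : Fin n) : U i * (r * U' i + U i * r' +
        ∑ j, (r * U i * D j j + U j * (r * D i j + U i * R j)) + γ * W * R i)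
        = r * (U i * U' i) + U i ^ 2 * r' + U i ^ 2 * (r * d) + r * ∑ j, U i * U j * D i j
          + U i ^ 2 * a + γ * W * (U i * R i) := by
      have : ∑ j, (r * U i * D j j + U j * (r * D i j + U i * R j))
          = r * U i * d + r * ∑ j, U j * D i j + U i * a := by
        rw [hd, ha, Finset.mul_sum, Finset.mul_sum, Finset.mul_sum, ← Finset.sum_add_distrib,
          ← Finset.sum_add_distrib]
        exact Finset.sum_congr rfl fun j _ => by ring
      rw [this]
      have h' : ∑ j, U i * U j * D i j = U i * ∑ j, U j * D i j := by
        rw [Finset.mul_sum]; exact Finset.sum_congr rfl fun j _ => by ring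
      rw [h']; ring
    rw [Finset.sum_congr rfl fun i _ => hi i] at hsum
    simp only [Finset.sum_add_distrib, ← Finset.mul_sum, ← Finset.sum_mul, ← hs, ← ha,
      ← hf] at hsum
    rw [Finset.sum_comm, ← he] at hsum
    linear_combination hsum
  have h3 : ∑ i, 2 * U i * U' i = 2 * f := by
    rw [hf, Finset.mul_sum]; exact Finset.sum_congr rfl fun j _ => by ring
  have h4 : ∑ j, ((1 / 2 * r * s + γ / (γ - 1) * (W * r)) * D j j +
        U j * ((1 / 2 * r * (∑ i, 2 * U i * D i j) + 1 / 2 * R j * s) +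
          γ / (γ - 1) * (γ * W * R j)))
      = (1 / 2 * r * s + γ / (γ - 1) * (W * r)) * d + r * e
        + (1 / 2 * s + γ / (γ - 1) * γ * W) * a := by
    rw [hd, ha, he, Finset.mul_sum, Finset.mul_sum, Finset.mul_sum, ← Finset.sum_add_distrib,
      ← Finset.sum_add_distrib]
    refine Finset.sum_congr rfl fun j _ => ?_
    have : ∑ i, U i * U j * D i j = 1 / 2 * U j * ∑ i, 2 * U i * D i j := by
      rw [Finset.mul_sum]; exact Finset.sum_congr rfl fun i _ => by ring
    rw [this]; ring
  rw [h3, h4]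
  have hγ' : γ - 1 ≠ 0 := by linarith
  field_simp
  linear_combination (2 * (γ - 1)) * h2 + (-(γ - 1) * s + 2 * γ * W) * h1

theorem energy_conservationLaw (S : IsentropicEulerSolution n γ T) (hγ : 1 < γ) :
    IsConservationLaw T S.energyDensity S.energyFlux where
  contDiffOn_density := by
    unfold energyDensity
    exact ((contDiffOn_const.mul S.smooth_ρ).mul (S.smooth_u.norm_sq ℝ)).add
      ((S.contDiffOn_pressure hγ).div_const _)
  contDiffOn_flux j := by
    unfold energyFlux
    exact (((contDiffOn_const.mul S.smooth_ρ).mul (S.smooth_u.norm_sq ℝ)).add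
      (contDiffOn_const.mul (S.contDiffOn_pressure hγ))).mul (S.contDiffOn_u_apply j)
  deriv_eq t ht x := by
    have hIcc := Set.Ioo_subset_Icc_self ht
    have hρt := (hasDerivAt_of_contDiffOn_Icc_prod S.smooth_ρ ht x).differentiableAt.hasDerivAt
    have hut (i : Fin n) := (hasDerivAt_of_contDiffOn_Icc_prod (q := fun t x => S.u t x i)
      (S.contDiffOn_u_apply i) ht x).differentiableAt.hasDerivAt
    have hρx := ((S.contDiff_ρ hIcc).differentiable one_ne_zero x).hasFDerivAt
    have hux (i : Fin n) :=
      ((S.contDiff_u_apply hIcc i).differentiable one_ne_zero x).hasFDerivAt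
    have hpx := hρx.rpow_const (p := γ) (Or.inr hγ.le)
    have hW : S.ρ t x ^ γ = S.ρ t x ^ (γ - 1) * S.ρ t x := by
      rw [← Real.rpow_add_one' (S.ρ_nonneg t hIcc x) (by linarith)]; simp
    have hmass := S.mass_eq t hIcc x
    simp only [fun i => (hρx.fun_mul (hux i)).fderiv] at hmass
    have hmom := S.momentum_eq t hIcc x
    simp only [fun i => (hρt.fun_mul (hut i)).deriv, hpx.fderiv,
      fun i j => ((hρx.fun_mul (hux i)).fun_mul (hux j)).fderiv] at hmom
    have hdt := ((((hρt.const_mul (1 / 2 : ℝ)).fun_mul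
      (HasDerivAt.fun_sum (u := Finset.univ) fun i _ => (hut i).fun_pow 2)).fun_add
        ((hρt.rpow_const (p := γ) (Or.inr hγ.le)).div_const (γ - 1)))).deriv
    have hux2 (i : Fin n) : HasFDerivAt (fun y => S.u t y i ^ 2)
        ((2 * S.u t x i) • fderiv ℝ (fun y => S.u t y i) x) x := by
      simpa using (hux i).pow 2
    have hdx (j : Fin n) := ((((hρx.const_mul (1 / 2 : ℝ)).fun_mul
      (HasFDerivAt.fun_sum (u := Finset.univ) fun i _ => hux2 i)).fun_add
        (hpx.const_mul (γ / (γ - 1)))).fun_mul (hux j)).fderiv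
    rw [eq_neg_iff_add_eq_zero, divergence]
    unfold energyDensity energyFlux
    simp only [EuclideanSpace.real_norm_sq_eq]
    rw [hdt]
    simp only [hdx]
    have key := energy_identity hγ (S.ρ t x) (deriv (fun τ => S.ρ τ x) t) (S.ρ t x ^ (γ - 1))
      (fun i => S.u t x i) (fun i => deriv (fun τ => S.u τ x i) t)
      (fun j => fderiv ℝ (S.ρ t) x (EuclideanSpace.single j 1))
      (fun i j => fderiv ℝ (fun x => S.u t x i) x (EuclideanSpace.single j 1)) ?_ ?_
    · convert key using 2
      · simp
      · simp only [add_apply, smul_apply, sum_apply, smul_eq_mul, hW]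
        exact Finset.sum_congr rfl fun j _ => by ring
    · simpa using hmass
    · intro i
      have := hmom i
      simp only [add_apply, smul_apply, smul_eq_mul] at this
      linear_combination this

theorem mul_abs_u_apply_le (S : IsentropicEulerSolution n γ T) {t : ℝ} (ht : t ∈ Set.Icc 0 T)
    (i : Fin n) (x : ℝ^ n) : |S.ρ t x * S.u t x i| ≤ S.ρ t x * ‖S.u t x‖ := by
  rw [abs_mul, abs_of_nonneg (S.ρ_nonneg t ht x)]
  exact mul_le_mul_of_nonneg_left (PiLp.norm_apply_le (S.u t x) i) (S.ρ_nonneg t ht x)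

theorem pressure_nonneg (S : IsentropicEulerSolution n γ T) {t : ℝ} (ht : t ∈ Set.Icc 0 T)
    (x : ℝ^ n) : 0 ≤ S.ρ t x ^ γ :=
  Real.rpow_nonneg (S.ρ_nonneg t ht x) γ

theorem abs_momentumFlux_le (S : IsentropicEulerSolution n γ T) {t : ℝ} (ht : t ∈ Set.Icc 0 T)
    (i j : Fin n) (x : ℝ^ n) :
    |S.momentumFlux i j t x| ≤ S.ρ t x * ‖S.u t x‖ ^ 2 + S.ρ t x ^ γ := by
  refine (abs_add_le _ _).trans (add_le_add ?_ ?_)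
  · rw [abs_mul, sq, ← mul_assoc]
    exact mul_le_mul (S.mul_abs_u_apply_le ht i x) (PiLp.norm_apply_le (S.u t x) j)
      (abs_nonneg _) (mul_nonneg (S.ρ_nonneg t ht x) (norm_nonneg _))
  · split_ifs
    · rw [abs_of_nonneg (S.pressure_nonneg ht x)]
    · simpa using S.pressure_nonneg ht x

theorem integrable_momentumFlux (S : IsentropicEulerSolution n γ T) (hγ : 1 < γ) {t : ℝ}
    (ht : t ∈ Set.Icc 0 T) (i j : Fin n) : Integrable (S.momentumFlux i j t) :=
  ((S.int_ρu2 t ht).add (S.int_ργ t ht)).mono'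
    ((S.momentum_conservationLaw hγ i).contDiff_flux ht j).continuous.aestronglyMeasurable
    (ae_of_all _ (S.abs_momentumFlux_le ht i j))

theorem exists_norm_u_le (S : IsentropicEulerSolution n γ T) {t : ℝ} (ht : t ∈ Set.Icc 0 T) :
    ∃ K, ∀ x, ‖S.u t x‖ ≤ K := by
  have h1 := S.decay_u t ht
  rw [Metric.cobounded_eq_cocompact] at h1
  obtain ⟨s, hs, hs'⟩ := mem_cocompact.1 (h1.eventually (gt_mem_nhds one_pos))
  obtain ⟨K, hK⟩ := hs.exists_bound_of_continuousOn (S.continuous_u ht).continuousOn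
  refine ⟨max K 1, fun x => ?_⟩
  by_cases hx : x ∈ s
  · exact (hK x hx).trans (le_max_left _ _)
  · exact (le_of_lt (hs' hx)).trans (le_max_right _ _)

theorem integrable_energyFlux (S : IsentropicEulerSolution n γ T) {t : ℝ}
    (ht : t ∈ Set.Icc 0 T) (j : Fin n) : Integrable (S.energyFlux j t) := by
  obtain ⟨K, hK⟩ := S.exists_norm_u_le ht
  refine Integrable.mul_bdd (c := K) ?_
    (S.contDiff_u_apply ht j).continuous.aestronglyMeasurable
    (ae_of_all _ fun x => (PiLp.norm_apply_le (S.u t x) j).trans (hK x))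
  simp only [mul_assoc]
  exact ((S.int_ρu2 t ht).const_mul _).add ((S.int_ργ t ht).const_mul _)

theorem M_eq (S : IsentropicEulerSolution n γ T) {t : ℝ} (ht : t ∈ Set.Icc 0 T) :
    S.M t = S.M 0 :=
  eq_of_hasDerivAt_zero_Ioo S.hM (fun _ hs => S.mass_conservationLaw.integral_deriv_eq_zero hs
    fun i => (S.int_ρu _ (Set.Ioo_subset_Icc_self hs)).mono'
      (S.mass_conservationLaw.contDiff_flux
        (Set.Ioo_subset_Icc_self hs) i).continuous.aestronglyMeasurable
      (ae_of_all _ (S.mul_abs_u_apply_le (Set.Ioo_subset_Icc_self hs) i))) ht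

theorem P_eq (S : IsentropicEulerSolution n γ T) (hγ : 1 < γ) {t : ℝ} (ht : t ∈ Set.Icc 0 T) :
    S.P t = S.P 0 := by
  refine eq_of_hasDerivAt_zero_Ioo S.hP (fun s hs => ?_) ht
  by_cases hd : Integrable fun x => deriv (fun τ => S.ρ τ x • S.u τ x) s
  · ext i
    rw [eval_integral_piLp fun i => hd.eval_piLp i]
    have h1 (x : ℝ^ n) : deriv (fun τ => S.ρ τ x • S.u τ x) s i
        = deriv (fun τ => S.ρ τ x * S.u τ x i) s := by
      have hx := (hasDerivAt_of_contDiffOn_Icc_prod (q := fun t x => S.ρ t x • S.u t x)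
        (S.smooth_ρ.smul S.smooth_u) hs x).differentiableAt.hasDerivAt
      exact ((EuclideanSpace.proj (𝕜 := ℝ) i).hasFDerivAt.comp_hasDerivAt s hx).deriv.symm
    simp only [h1]
    exact (S.momentum_conservationLaw hγ i).integral_deriv_eq_zero hs
      (S.integrable_momentumFlux hγ (Set.Ioo_subset_Icc_self hs) i)
  · exact integral_undef hd

theorem integral_energyDensity (S : IsentropicEulerSolution n γ T) {t : ℝ}
    (ht : t ∈ Set.Icc 0 T) : ∫ x, S.energyDensity t x = S.IE t := by
  simp only [energyDensity, IE, Ek, I, mul_assoc]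
  rw [integral_add ((S.int_ρu2 t ht).const_mul _) ((S.int_ργ t ht).div_const _),
    integral_const_mul, integral_div]
  ring

theorem IE_eq (S : IsentropicEulerSolution n γ T) (hγ : 1 < γ) {t : ℝ} (ht : t ∈ Set.Icc 0 T) :
    S.IE t = S.IE 0 := by
  rw [← S.integral_energyDensity ht, ← S.integral_energyDensity ⟨le_rfl, ht.1.trans ht.2⟩]
  exact eq_of_hasDerivAt_zero_Ioo S.hIE (fun s hs =>
    (S.energy_conservationLaw hγ).integral_deriv_eq_zero hs
      (S.integrable_energyFlux (Set.Ioo_subset_Icc_self hs))) ht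

theorem Ek_nonneg (S : IsentropicEulerSolution n γ T) {t : ℝ} (ht : t ∈ Set.Icc 0 T) :
    0 ≤ S.Ek t :=
  mul_nonneg (by norm_num)
    (integral_nonneg fun x => mul_nonneg (S.ρ_nonneg t ht x) (sq_nonneg _))

theorem I_nonneg (S : IsentropicEulerSolution n γ T) (hγ : 1 < γ) {t : ℝ}
    (ht : t ∈ Set.Icc 0 T) : 0 ≤ S.I t :=
  mul_nonneg (one_div_nonneg.2 (by linarith)) (integral_nonneg (S.pressure_nonneg ht))

theorem sq_norm_P_le (S : IsentropicEulerSolution n γ T) {t : ℝ} (ht : t ∈ Set.Icc 0 T)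
    (hM : 0 < S.M t) : ‖S.P t‖ ^ 2 / S.M t ≤ 2 * S.Ek t := by
  have hPi : Integrable fun x => S.ρ t x • S.u t x := by
    refine (S.int_ρu t ht).mono'
      ((S.contDiff_ρ ht).continuous.smul (S.continuous_u ht)).aestronglyMeasurable
      (ae_of_all _ fun x => ?_)
    rw [norm_smul, Real.norm_of_nonneg (S.ρ_nonneg t ht x)]
  obtain ⟨c, hc⟩ : ∃ c, c = (S.M t)⁻¹ • S.P t := ⟨_, rfl⟩
  have h1 : 0 ≤ ∫ x, S.ρ t x * ‖S.u t x - c‖ ^ 2 :=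
    integral_nonneg fun x => mul_nonneg (S.ρ_nonneg t ht x) (sq_nonneg _)
  have h2 (x : ℝ^ n) : S.ρ t x * ‖S.u t x - c‖ ^ 2
      = S.ρ t x * ‖S.u t x‖ ^ 2 - 2 * ⟪c, S.ρ t x • S.u t x⟫_ℝ + ‖c‖ ^ 2 * S.ρ t x := by
    rw [norm_sub_sq_real, inner_smul_right, real_inner_comm c]; ring
  have h5 := (hPi.const_inner (𝕜 := ℝ) c).const_mul 2
  simp only [h2] at h1
  rw [integral_add (f := fun x => S.ρ t x * ‖S.u t x‖ ^ 2 - 2 * ⟪c, S.ρ t x • S.u t x⟫_ℝ)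
    ((S.int_ρu2 t ht).sub h5) ((S.int_ρ t ht).const_mul _), integral_sub (S.int_ρu2 t ht) h5,
    integral_const_mul, integral_const_mul, integral_inner hPi] at h1
  change 0 ≤ (∫ x, S.ρ t x * ‖S.u t x‖ ^ 2) - 2 * ⟪c, S.P t⟫_ℝ + ‖c‖ ^ 2 * S.M t at h1
  have h3 : ⟪c, S.P t⟫_ℝ = ‖S.P t‖ ^ 2 / S.M t := by
    rw [hc, real_inner_smul_left, real_inner_self_eq_norm_sq]; ring
  have h4 : ‖c‖ ^ 2 * S.M t = ‖S.P t‖ ^ 2 / S.M t := by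
    rw [hc, norm_smul, Real.norm_of_nonneg (inv_nonneg.2 hM.le)]; field_simp
  rw [h3, h4] at h1
  rw [Ek]
  linarith

theorem exists_G_le (S : IsentropicEulerSolution n γ T) : ∃ K, ∀ t ∈ Set.Icc 0 T, S.G t ≤ K := by
  obtain ⟨K, hK⟩ := (isCompact_Icc (a := (0 : ℝ)) (b := T)).exists_bound_of_continuousOn (f := S.G)
    fun t ht => (S.hG t ht).continuousAt.continuousWithinAt
  exact ⟨K, fun t ht => (le_abs_self _).trans (hK t ht)⟩

/-- The integrated form of `G' = F`. -/
theorem integral_F (S : IsentropicEulerSolution n γ T) (hγ : 1 < γ) {t : ℝ}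
    (ht : t ∈ Set.Icc 0 T) :
    IntervalIntegrable S.F volume 0 t ∧ ∫ τ in (0 : ℝ)..t, S.F τ = S.G t - S.G 0 := by
  obtain ⟨χ, C, hχ⟩ := exists_isCutoffSeq n
  obtain ⟨K, hK⟩ := S.exists_G_le
  have hC := hχ.nonneg
  set φ : (ℝ^ n) → ℝ := fun x => 1 / 2 * ‖x‖ ^ 2 with hφdef
  have hφ : ContDiff ℝ 1 φ := contDiff_const.mul (contDiff_norm_sq ℝ)
  have hφ' (x : ℝ^ n) : fderiv ℝ φ x = innerSL ℝ x := by
    rw [((hasStrictFDerivAt_norm_sq x).hasFDerivAt.const_mul (1 / 2 : ℝ)).fderiv]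
    ext y; simp
  have hflux (τ : ℝ) (x : ℝ^ n) : derivAlong φ (fun i x => S.ρ τ x * S.u τ x i) x
      = S.ρ τ x * ⟪S.u τ x, x⟫_ℝ := by
    simp only [derivAlong, hφ', innerSL_apply_apply, PiLp.inner_apply, Finset.mul_sum]
    exact Finset.sum_congr rfl fun i _ => by simp; ring
  have hg : ∀ τ ∈ Set.Icc 0 T, Integrable fun x =>
      (1 + C) * n * (S.ρ τ x * ‖S.u τ x‖ ^ 2 + S.ρ τ x * ‖x‖ ^ 2) := fun τ hτ =>
    ((S.int_ρu2 τ hτ).add (S.int_ρx2 τ hτ)).const_mul _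
  have key := S.mass_conservationLaw.weighted_balance hχ hφ
    (K := (1 + C) * n * (2 * S.IE 0 + 2 * K)) ?_ hg ?_ ?_ ht
  · simp only [hflux] at key
    refine ⟨key.1, key.2.trans ?_⟩
    simp only [G, ← integral_const_mul, hφdef]
    congr 2 <;> ext x <;> ring
  · exact fun τ hτ => ((S.int_ρx2 τ hτ).const_mul (1 / 2)).congr
      (ae_of_all _ fun x => by simp only [hφdef]; ring)
  · intro τ hτ
    rw [integral_const_mul, integral_add (S.int_ρu2 τ hτ) (S.int_ρx2 τ hτ)]
    have h1 := S.IE_eq hγ hτ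
    have h2 := S.I_nonneg hγ hτ
    have h3 := hK τ hτ
    rw [IE, Ek] at h1
    rw [G] at h3
    gcongr <;> linarith
  · intro τ hτ k x
    have hρ := S.ρ_nonneg τ hτ x
    have h1 : ‖fderiv ℝ (fun y => χ k y * φ y) x‖ ≤ (1 + C) * ‖x‖ := by
      refine (hχ.norm_fderiv_mul_le_add hφ k x).trans ?_
      have h2 := mul_le_mul_of_nonneg_right (hχ.norm_fderiv_mul_le k x) (norm_nonneg x)
      have h3 : |φ x| = 1 / 2 * ‖x‖ ^ 2 := abs_of_nonneg (by positivity)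
      rw [hφ', innerSL_apply_norm, h3]
      nlinarith [norm_nonneg x, mul_nonneg hC (norm_nonneg x)]
    have h4 : ∑ i, |S.ρ τ x * S.u τ x i| ≤ n * (S.ρ τ x * ‖S.u τ x‖) := by
      simpa using Finset.sum_le_card_nsmul Finset.univ _ _
        fun i _ => S.mul_abs_u_apply_le hτ i x
    calc _ ≤ _ := abs_derivAlong_le _ _ x
      _ ≤ (1 + C) * ‖x‖ * (n * (S.ρ τ x * ‖S.u τ x‖)) := by gcongr
      _ = (1 + C) * n * (S.ρ τ x * (‖S.u τ x‖ * ‖x‖)) := by ring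
      _ ≤ (1 + C) * n * (S.ρ τ x * (‖S.u τ x‖ ^ 2 + ‖x‖ ^ 2)) := by
        gcongr
        nlinarith [sq_nonneg (‖S.u τ x‖ - ‖x‖), sq_nonneg ‖S.u τ x‖, sq_nonneg ‖x‖]
      _ = _ := by ring

theorem norm_fderiv_apply_le (i : Fin n) (x : ℝ^ n) :
    ‖fderiv ℝ (fun y : ℝ^ n => y i) x‖ ≤ 1 := by
  have h : HasFDerivAt (fun y : ℝ^ n => y i) (EuclideanSpace.proj (𝕜 := ℝ) i) x :=
    (EuclideanSpace.proj (𝕜 := ℝ) i).hasFDerivAt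
  rw [h.fderiv]
  exact ContinuousLinearMap.opNorm_le_bound _ zero_le_one fun y => by
    simpa using PiLp.norm_apply_le y i

theorem integrable_apply_mul (S : IsentropicEulerSolution n γ T) {t : ℝ} (ht : t ∈ Set.Icc 0 T)
    (i : Fin n) : Integrable fun x : ℝ^ n => x i * (S.ρ t x * S.u t x i) := by
  refine (S.int_ρux t ht).mono' ?_ (ae_of_all _ fun x => ?_)
  · have h1 := (S.contDiff_ρ ht).continuous
    have h2 := (S.contDiff_u_apply ht i).continuous
    exact ((EuclideanSpace.proj (𝕜 := ℝ) i).continuous.mul (h1.mul h2)).aestronglyMeasurable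
  · rw [norm_mul, mul_comm]
    exact mul_le_mul (S.mul_abs_u_apply_le ht i x) (PiLp.norm_apply_le x i) (norm_nonneg _)
      (mul_nonneg (S.ρ_nonneg t ht x) (norm_nonneg _))

/-- The integrated balance law for the `i`-th component of the momentum weight. -/
theorem integral_apply_mul (S : IsentropicEulerSolution n γ T) (hγ : 1 < γ) (i : Fin n) {t : ℝ}
    (ht : t ∈ Set.Icc 0 T) :
    IntervalIntegrable (fun τ => ∫ x, S.momentumFlux i i τ x) volume 0 t ∧
    ∫ τ in (0 : ℝ)..t, ∫ x, S.momentumFlux i i τ x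
      = (∫ x : ℝ^ n, x i * (S.ρ t x * S.u t x i)) - ∫ x : ℝ^ n, x i * (S.ρ 0 x * S.u 0 x i) := by
  obtain ⟨χ, C, hχ⟩ := exists_isCutoffSeq n
  have hC := hχ.nonneg
  have hφ : ContDiff ℝ 1 (fun x : ℝ^ n => x i) := (EuclideanSpace.proj (𝕜 := ℝ) i).contDiff
  have hφ' (x : ℝ^ n) : fderiv ℝ (fun x : ℝ^ n => x i) x = EuclideanSpace.proj i :=
    (EuclideanSpace.proj (𝕜 := ℝ) i).fderiv
  have hflux (τ : ℝ) (x : ℝ^ n) : derivAlong (fun x : ℝ^ n => x i)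
      (fun j => S.momentumFlux i j τ) x = S.momentumFlux i i τ x := by
    simp [derivAlong, hφ']
  have key := (S.momentum_conservationLaw hγ i).weighted_balance hχ hφ
    (K := (1 + C) * n * (2 * S.IE 0 + (γ - 1) * S.IE 0))
    (g := fun τ x => (1 + C) * n * (S.ρ τ x * ‖S.u τ x‖ ^ 2 + S.ρ τ x ^ γ))
    (fun τ hτ => S.integrable_apply_mul hτ i)
    (fun τ hτ => ((S.int_ρu2 τ hτ).add (S.int_ργ τ hτ)).const_mul _) ?_ ?_ ht
  · simpa only [hflux] using key
  · intro τ hτ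
    rw [integral_const_mul, integral_add (S.int_ρu2 τ hτ) (S.int_ργ τ hτ)]
    have h1 := S.IE_eq hγ hτ
    have h2 := S.I_nonneg hγ hτ
    have h3 := S.Ek_nonneg hτ
    have hγ' : 0 < γ - 1 := by linarith
    have h4 : ∫ x, S.ρ τ x ^ γ = (γ - 1) * S.I τ := by rw [I]; field_simp
    have h5 : ∫ x, S.ρ τ x * ‖S.u τ x‖ ^ 2 = 2 * S.Ek τ := by rw [Ek]; ring
    rw [h4, h5, ← h1, IE]
    gcongr <;> linarith
  · intro τ hτ k x
    have h1 : ‖fderiv ℝ (fun y : ℝ^ n => χ k y * y i) x‖ ≤ 1 + C := by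
      refine (hχ.norm_fderiv_mul_le_add hφ k x).trans (add_le_add (norm_fderiv_apply_le i x) ?_)
      exact (mul_le_mul_of_nonneg_left (PiLp.norm_apply_le x i) (norm_nonneg _)).trans
        (hχ.norm_fderiv_mul_le k x)
    have h4 : ∑ j, |S.momentumFlux i j τ x| ≤ n * (S.ρ τ x * ‖S.u τ x‖ ^ 2 + S.ρ τ x ^ γ) := by
      simpa [mul_add] using Finset.sum_le_card_nsmul Finset.univ _ _
        fun j _ => S.abs_momentumFlux_le hτ i j x
    calc _ ≤ _ := abs_derivAlong_le _ _ x
      _ ≤ (1 + C) * (n * (S.ρ τ x * ‖S.u τ x‖ ^ 2 + S.ρ τ x ^ γ)) := by gcongr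
      _ = _ := by ring

theorem F_eq_sum (S : IsentropicEulerSolution n γ T) {t : ℝ} (ht : t ∈ Set.Icc 0 T) :
    S.F t = ∑ i, ∫ x : ℝ^ n, x i * (S.ρ t x * S.u t x i) := by
  rw [F, ← integral_finsetSum _ fun i _ => S.integrable_apply_mul ht i]
  congr 1 with x
  rw [PiLp.inner_apply, Finset.mul_sum]
  exact Finset.sum_congr rfl fun i _ => by simp; ring

theorem sum_integral_momentumFlux (S : IsentropicEulerSolution n γ T) (hγ : 1 < γ) {t : ℝ}
    (ht : t ∈ Set.Icc 0 T) :
    ∑ i, ∫ x, S.momentumFlux i i t x = 2 * S.Ek t + n * (γ - 1) * S.I t := by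
  rw [← integral_finsetSum _ fun i _ => S.integrable_momentumFlux hγ ht i i]
  have h (x : ℝ^ n) : ∑ i, S.momentumFlux i i t x
      = S.ρ t x * ‖S.u t x‖ ^ 2 + n * S.ρ t x ^ γ := by
    simp only [momentumFlux, if_true, Finset.sum_add_distrib, EuclideanSpace.real_norm_sq_eq,
      Finset.mul_sum, Finset.sum_const, Finset.card_univ, Fintype.card_fin, nsmul_eq_mul]
    congr 1
    exact Finset.sum_congr rfl fun i _ => by ring
  simp only [h]
  rw [integral_add (S.int_ρu2 t ht) ((S.int_ργ t ht).const_mul _), integral_const_mul, Ek, I]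
  have hγ' : γ - 1 ≠ 0 := by linarith
  field_simp

/-- The integrated form of `F' = 2 E_k + n (γ - 1) I`. -/
theorem integral_virial (S : IsentropicEulerSolution n γ T) (hγ : 1 < γ) {t : ℝ}
    (ht : t ∈ Set.Icc 0 T) :
    IntervalIntegrable (fun τ => 2 * S.Ek τ + n * (γ - 1) * S.I τ) volume 0 t ∧
    ∫ τ in (0 : ℝ)..t, (2 * S.Ek τ + n * (γ - 1) * S.I τ) = S.F t - S.F 0 := by
  have hmem : ∀ τ ∈ Set.uIcc 0 t, τ ∈ Set.Icc 0 T := fun τ hτ => by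
    rw [Set.uIcc_of_le ht.1] at hτ
    exact ⟨hτ.1, hτ.2.trans ht.2⟩
  have h (i : Fin n) := S.integral_apply_mul hγ i ht
  have heq : Set.EqOn (fun τ => ∑ i, ∫ x, S.momentumFlux i i τ x)
      (fun τ => 2 * S.Ek τ + n * (γ - 1) * S.I τ) (Set.uIcc 0 t) := fun τ hτ =>
    S.sum_integral_momentumFlux hγ (hmem τ hτ)
  refine ⟨?_, ?_⟩
  · refine IntervalIntegrable.congr (f := fun τ => ∑ i, ∫ x, S.momentumFlux i i τ x)
      (heq.mono Set.uIoc_subset_uIcc) ?_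
    simpa only [Finset.sum_fn] using IntervalIntegrable.sum Finset.univ fun i _ => (h i).1
  · rw [← intervalIntegral.integral_congr heq,
      intervalIntegral.integral_finsetSum fun i _ => (h i).1,
      S.F_eq_sum ht, S.F_eq_sum ⟨le_rfl, ht.1.trans ht.2⟩, ← Finset.sum_sub_distrib]
    exact Finset.sum_congr rfl fun i _ => (h i).2

/-- Bounds on `F'` integrate twice to quadratic bounds on `G`. -/
theorem G_mem_Icc_of_virial_mem_Icc (S : IsentropicEulerSolution n γ T) (hγ : 1 < γ) {b B : ℝ}
    (hbB : ∀ t ∈ Set.Icc 0 T, 2 * S.Ek t + n * (γ - 1) * S.I t ∈ Set.Icc b B) {t : ℝ}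
    (ht : t ∈ Set.Icc 0 T) :
    S.G t ∈ Set.Icc (b / 2 * t ^ 2 + S.F 0 * t + S.G 0) (B / 2 * t ^ 2 + S.F 0 * t + S.G 0) := by
  have hF : ∀ s ∈ Set.Icc 0 T, S.F s ∈ Set.Icc (S.F 0 + b * s) (S.F 0 + B * s) := by
    intro s hs
    obtain ⟨h1, h2⟩ := S.integral_virial hγ hs
    have hlo := intervalIntegral.integral_mono_on hs.1 intervalIntegrable_const h1
      fun τ hτ => (hbB τ ⟨hτ.1, hτ.2.trans hs.2⟩).1
    have hhi := intervalIntegral.integral_mono_on hs.1 h1 intervalIntegrable_const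
      fun τ hτ => (hbB τ ⟨hτ.1, hτ.2.trans hs.2⟩).2
    simp only [intervalIntegral.integral_const, smul_eq_mul, h2] at hlo hhi
    constructor <;> linarith
  obtain ⟨h1, h2⟩ := S.integral_F hγ ht
  have hint (c : ℝ) : IntervalIntegrable (fun s => S.F 0 + c * s) volume 0 t :=
    Continuous.intervalIntegrable (by fun_prop) _ _
  have hval (c : ℝ) : ∫ s in (0 : ℝ)..t, (S.F 0 + c * s) = S.F 0 * t + c / 2 * t ^ 2 := by
    rw [intervalIntegral.integral_add intervalIntegrable_const
      (Continuous.intervalIntegrable (by fun_prop) _ _),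
      intervalIntegral.integral_const_mul, integral_id]
    simp
    ring
  have hlo := intervalIntegral.integral_mono_on ht.1 (hint b) h1
    fun τ hτ => (hF τ ⟨hτ.1, hτ.2.trans ht.2⟩).1
  have hhi := intervalIntegral.integral_mono_on ht.1 h1 (hint B)
    fun τ hτ => (hF τ ⟨hτ.1, hτ.2.trans ht.2⟩).2
  rw [hval, h2] at hlo hhi
  constructor <;> linarith

theorem sq_norm_P_le_virial (S : IsentropicEulerSolution n γ T) (hγ : 1 < γ) (hM0 : 0 < S.M 0)
    {t : ℝ} (ht : t ∈ Set.Icc 0 T) :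
    ‖S.P 0‖ ^ 2 / S.M 0 ≤ 2 * S.Ek t + n * (γ - 1) * S.I t := by
  have h1 := S.sq_norm_P_le ht (by rwa [S.M_eq ht])
  rw [S.M_eq ht, S.P_eq hγ ht] at h1
  have h2 : 0 ≤ n * (γ - 1) * S.I t :=
    mul_nonneg (mul_nonneg n.cast_nonneg (by linarith)) (S.I_nonneg hγ ht)
  linarith

end IsentropicEulerSolution

/-- **Lemma 3.3, isentropic Euler case: two-sided bounds on the momentum of inertia.**
If `1 < γ ≤ 1 + 2/n` then
`(‖ℙ(0)‖²/(2M(0))) t² + F(0) t + G(0) ≤ G(t) ≤ IE(0) t² + F(0) t + G(0)`,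
while if `γ > 1 + 2/n` then
`(‖ℙ(0)‖²/(2M(0))) t² + F(0) t + G(0) ≤ G(t) ≤ (n(γ−1)/2) IE(0) t² + F(0) t + G(0)`. -/
theorem IsentropicEulerSolution.inertia_two_sided_bounds
    {n : ℕ} {γ T : ℝ} (hn : 1 ≤ n) (hγ : 1 < γ) (hT : 0 < T)
    (S : IsentropicEulerSolution n γ T)
    (hM0 : 0 < S.M 0) :
    (γ ≤ 1 + 2 / n →
      ∀ t ∈ Set.Icc 0 T,
        (‖S.P 0‖ ^ 2 / (2 * S.M 0)) * t ^ 2 + S.F 0 * t + S.G 0 ≤ S.G t ∧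
        S.G t ≤ S.IE 0 * t ^ 2 + S.F 0 * t + S.G 0) ∧
    (1 + 2 / n < γ →
      ∀ t ∈ Set.Icc 0 T,
        (‖S.P 0‖ ^ 2 / (2 * S.M 0)) * t ^ 2 + S.F 0 * t + S.G 0 ≤ S.G t ∧
        S.G t ≤ (n * (γ - 1) / 2) * S.IE 0 * t ^ 2 + S.F 0 * t + S.G 0) := by
  have hn0 : (0 : ℝ) < n := by exact_mod_cast hn
  have hlow : ‖S.P 0‖ ^ 2 / (2 * S.M 0) = ‖S.P 0‖ ^ 2 / S.M 0 / 2 := by rw [div_div, mul_comm]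
  refine ⟨fun h t ht => ?_, fun h t ht => ?_⟩
  · have hc : n * (γ - 1) ≤ 2 := by
      rw [mul_comm, ← le_div_iff₀ hn0]; linarith
    have := S.G_mem_Icc_of_virial_mem_Icc hγ (B := 2 * S.IE 0)
      (fun s hs => ⟨S.sq_norm_P_le_virial hγ hM0 hs, by
        rw [← S.IE_eq hγ hs, IE]
        nlinarith [mul_le_mul_of_nonneg_right hc (S.I_nonneg hγ hs)]⟩) ht
    rw [hlow]
    exact ⟨this.1, this.2.trans_eq (by ring)⟩
  · have hc : 2 ≤ n * (γ - 1) := by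
      rw [mul_comm, ← div_le_iff₀ hn0]; linarith
    have := S.G_mem_Icc_of_virial_mem_Icc hγ (B := n * (γ - 1) * S.IE 0)
      (fun s hs => ⟨S.sq_norm_P_le_virial hγ hM0 hs, by
        rw [← S.IE_eq hγ hs, IE]
        nlinarith [mul_le_mul_of_nonneg_right hc (S.Ek_nonneg hs)]⟩) ht
    rw [hlow]
    exact ⟨this.1, this.2.trans_eq (by ring)⟩
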